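/- (Theorem 5, part 1) Let y* ∈ Ω solve the variational inequality ⟨g(y*), y − y*⟩ ≤ 0 for all y ∈ Ω. Suppose there exists δ > 0 with ⟨g(y) − g(y*), y − y*⟩ ≤ −δ‖y − y*‖² for all y ∈ Ω, and g is L-Lipschitz on Ω: ‖g(y₁) − g(y₂)‖ ≤ L‖y₁ − y₂‖ for all y₁, y₂ ∈ Ω, with δ ≤ L. Let 0 < t < (√2·L)⁻¹, set ν(t) = 1 + 2δt − 2(tL)² and q(t) = 1 − 2δt + 4(δt)²/ν(t). Then 0 < q(t) < 1, and the extra pseudo-gradient iterates ŷ_s = P_Ω(y_s + t·g(y_s)), y_{s+1} = P_Ω(y_s + t·g(ŷ_s)) satisfy ‖y_{s+1} − y*‖ ≤ √(q(t))·‖y_s − y*‖ for every s ≥ 0. -/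

import Mathlib

open Matrix Filter
open scoped BigOperators

noncomputable section

/-- Vectors in ℝ^k. -/
abbrev Vec (k : ℕ) := Fin k → ℝ

/-- Standard Euclidean inner product on ℝ^k. -/
def ip {k : ℕ} (u v : Vec k) : ℝ := ∑ i, u i * v i

/-- Standard Euclidean norm on ℝ^k. -/
def nrm {k : ℕ} (u : Vec k) : ℝ := Real.sqrt (ip u u)

/-- The space ℝⁿ × ℝⁿ × ℝᵐ of triples y = (x, λ, v). -/
abbrev Triple (n m : ℕ) := Vec n × Vec n × Vec m

/-- Euclidean inner product on the triple space. -/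
def ipT {n m : ℕ} (y z : Triple n m) : ℝ :=
  ip y.1 z.1 + ip y.2.1 z.2.1 + ip y.2.2 z.2.2

/-- Euclidean norm on the triple space. -/
def nrmT {n m : ℕ} (y : Triple n m) : ℝ := Real.sqrt (ipT y y)

/-- Ω = ℝ₊ⁿ × ℝ₊ⁿ × ℝ₊ᵐ. -/
def Om (n m : ℕ) : Set (Triple n m) :=
  {y | (∀ j, 0 ≤ y.1 j) ∧ (∀ j, 0 ≤ y.2.1 j) ∧ (∀ i, 0 ≤ y.2.2 i)}

/-- The operator g(x, λ, v) = ((I − A)ᵀλ − p(x) − Bᵀv, c(λ) − (I − A)x, Bx − r(v)). -/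
def gOp {n m : ℕ} (A : Matrix (Fin n) (Fin n) ℝ) (B : Matrix (Fin m) (Fin n) ℝ)
    (p c : Vec n → Vec n) (r : Vec m → Vec m) (y : Triple n m) : Triple n m :=
  ((1 - A)ᵀ *ᵥ y.2.1 - p y.1 - Bᵀ *ᵥ y.2.2,
   c y.2.1 - (1 - A) *ᵥ y.1,
   B *ᵥ y.1 - r y.2.2)

/-- P_Ω : componentwise positive part (Euclidean projection onto Ω). -/
def projOm {n m : ℕ} (y : Triple n m) : Triple n m :=
  (fun j => max (y.1 j) 0, fun j => max (y.2.1 j) 0, fun i => max (y.2.2 i) 0)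

lemma ip_comm' {k : ℕ} (u v : Vec k) : ip u v = ip v u := by
  simp only [ip, mul_comm]

lemma ip_sub_left' {k : ℕ} (u v w : Vec k) : ip (u - v) w = ip u w - ip v w := by
  simp only [ip, Pi.sub_apply, sub_mul, Finset.sum_sub_distrib]

lemma ip_add_left' {k : ℕ} (u v w : Vec k) : ip (u + v) w = ip u w + ip v w := by
  simp only [ip, Pi.add_apply, add_mul, Finset.sum_add_distrib]

lemma ip_smul_left' {k : ℕ} (a : ℝ) (u w : Vec k) : ip (a • u) w = a * ip u w := by
  simp only [ip, Pi.smul_apply, smul_eq_mul, mul_assoc, Finset.mul_sum]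

lemma ip_self_nonneg' {k : ℕ} (u : Vec k) : 0 ≤ ip u u :=
  Finset.sum_nonneg fun i _ => mul_self_nonneg _

lemma ip_proj {k : ℕ} (w x : Vec k) (hx : ∀ j, 0 ≤ x j) :
    ip (w - fun j => max (w j) 0) (x - fun j => max (w j) 0) ≤ 0 := by
  refine Finset.sum_nonpos fun j _ => ?_
  simp only [Pi.sub_apply]
  rcases le_total (w j) 0 with h | h
  · rw [max_eq_right h]; nlinarith [hx j]
  · rw [max_eq_left h]; simp

lemma ipT_comm {n m : ℕ} (u v : Triple n m) : ipT u v = ipT v u := by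
  simp only [ipT, ip_comm' u.1, ip_comm' u.2.1, ip_comm' u.2.2]

lemma ipT_sub_left {n m : ℕ} (u v w : Triple n m) : ipT (u - v) w = ipT u w - ipT v w := by
  simp only [ipT, Prod.fst_sub, Prod.snd_sub, ip_sub_left']; ring

lemma ipT_add_left {n m : ℕ} (u v w : Triple n m) : ipT (u + v) w = ipT u w + ipT v w := by
  simp only [ipT, Prod.fst_add, Prod.snd_add, ip_add_left']; ring

lemma ipT_smul_left {n m : ℕ} (a : ℝ) (u w : Triple n m) : ipT (a • u) w = a * ipT u w := by
  simp only [ipT, Prod.smul_fst, Prod.smul_snd, ip_smul_left']; ring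

lemma ipT_sub_right {n m : ℕ} (u v w : Triple n m) : ipT w (u - v) = ipT w u - ipT w v := by
  rw [ipT_comm, ipT_sub_left, ipT_comm u, ipT_comm v]

lemma ipT_add_right {n m : ℕ} (u v w : Triple n m) : ipT w (u + v) = ipT w u + ipT w v := by
  rw [ipT_comm, ipT_add_left, ipT_comm u, ipT_comm v]

lemma ipT_smul_right {n m : ℕ} (a : ℝ) (u w : Triple n m) : ipT w (a • u) = a * ipT w u := by
  rw [ipT_comm, ipT_smul_left, ipT_comm u]

lemma ipT_self_nonneg {n m : ℕ} (u : Triple n m) : 0 ≤ ipT u u :=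
  add_nonneg (add_nonneg (ip_self_nonneg' _) (ip_self_nonneg' _)) (ip_self_nonneg' _)

lemma nrmT_sq {n m : ℕ} (u : Triple n m) : nrmT u ^ 2 = ipT u u :=
  Real.sq_sqrt (ipT_self_nonneg u)

lemma ipT_proj {n m : ℕ} (w x : Triple n m) (hx : x ∈ Om n m) :
    ipT (w - projOm w) (x - projOm w) ≤ 0 :=
  add_nonpos (add_nonpos (ip_proj _ _ hx.1) (ip_proj _ _ hx.2.1)) (ip_proj _ _ hx.2.2)

lemma projOm_mem {n m : ℕ} (w : Triple n m) : projOm w ∈ Om n m :=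
  ⟨fun _ => le_max_right _ _, fun _ => le_max_right _ _, fun _ => le_max_right _ _⟩

lemma extra_step {n m : ℕ} (y u z ys gy gu gs : Triple n m) (δ L t : ℝ) (ht : 0 < t)
    (hz : ipT (y + t • gu - z) (ys - z) ≤ 0)
    (hu : ipT (y + t • gy - u) (z - u) ≤ 0)
    (hVI : ipT gs (u - ys) ≤ 0)
    (hmono : ipT (gu - gs) (u - ys) ≤ -δ * ipT (u - ys) (u - ys))
    (hlip : ipT (gu - gy) (gu - gy) ≤ L ^ 2 * ipT (u - y) (u - y)) :
    ipT (z - ys) (z - ys) ≤ ipT (y - ys) (y - ys) - (1 - (t * L) ^ 2) * ipT (u - y) (u - y)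
      - 2 * (δ * t) * ipT (u - ys) (u - ys) := by
  have h1 := ipT_self_nonneg (t • (gu - gy) - (z - u))
  have h2 : t * ipT gs (u - ys) ≤ 0 := mul_nonpos_of_nonneg_of_nonpos ht.le hVI
  have h3 := mul_le_mul_of_nonneg_left hmono ht.le
  have h4 := mul_le_mul_of_nonneg_left hlip (sq_nonneg t)
  simp only [ipT_sub_left, ipT_add_left, ipT_smul_left, ipT_sub_right, ipT_add_right,
    ipT_smul_right] at *
  simp only [ipT_comm u y, ipT_comm z y, ipT_comm ys y, ipT_comm z u, ipT_comm ys u,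
    ipT_comm ys z, ipT_comm gu gy, ipT_comm y gu, ipT_comm y gy, ipT_comm u gu, ipT_comm u gy,
    ipT_comm z gu, ipT_comm z gy, ipT_comm ys gu, ipT_comm ys gy] at *
  linarith

lemma extra_final {n m : ℕ} (y u ys : Triple n m) (x T R : ℝ) (hx : 0 < x) (hT : 2 * T ^ 2 < 1)
    (h : R ≤ ipT (y - ys) (y - ys) - (1 - T ^ 2) * ipT (u - y) (u - y)
      - 2 * x * ipT (u - ys) (u - ys)) :
    R ≤ (1 - 2 * x + 4 * x ^ 2 / (1 + 2 * x - 2 * T ^ 2)) * ipT (y - ys) (y - ys) := by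
  have hν : 0 < 1 + 2 * x - 2 * T ^ 2 := by linarith
  set ν := 1 + 2 * x - 2 * T ^ 2 with hνd
  have h1 := ipT_self_nonneg (ν • (u - y) + (2 * x) • (y - ys))
  have h2 : ipT (u - ys) (u - ys) =
      ipT (u - y) (u - y) + 2 * ipT (u - y) (y - ys) + ipT (y - ys) (y - ys) := by
    have : u - ys = (u - y) + (y - ys) := by abel
    rw [this]
    generalize u - y = a
    generalize y - ys = b
    rw [ipT_add_left, ipT_add_right, ipT_add_right, ipT_comm b a]; ring
  rw [h2] at h
  have hb := ipT_self_nonneg (u - y)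
  clear h2
  generalize u - y = a at *
  generalize y - ys = b at *
  simp only [ipT_add_left, ipT_smul_left, ipT_add_right, ipT_smul_right, ipT_comm b a] at h1
  have h3 : 0 ≤ ν * ipT a a + 4 * x * ipT a b + 4 * x ^ 2 / ν * ipT b b := by
    have h5 := div_nonneg h1 hν.le
    have : ν * ipT a a + 4 * x * ipT a b + 4 * x ^ 2 / ν * ipT b b =
      (ν * (ν * ipT a a + 2 * x * ipT a b) + 2 * x * (ν * ipT a b + 2 * x * ipT b b)) / ν := by
      field_simp; ring
    rw [this]
    convert h5 using 2
  have h6 : 0 ≤ T ^ 2 * ipT a a := mul_nonneg (sq_nonneg _) hb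
  have h7 : ν * ipT a a = ipT a a + 2 * x * ipT a a - 2 * (T ^ 2 * ipT a a) := by
    rw [hνd]; ring
  nlinarith

/-- Theorem 5, part 1: under strong monotonicity at y* and Lipschitz
continuity of g on Ω with δ ≤ L, for 0 < t < (√2·L)⁻¹, with ν(t) = 1 + 2δt − 2(tL)²
and q(t) = 1 − 2δt + 4(δt)²/ν(t), one has 0 < q(t) < 1 and
‖y_{s+1} − y*‖ ≤ √(q(t))·‖y_s − y*‖ for the extra pseudo-gradient iterates. -/
theorem stmt17 {n m : ℕ} (hn : 0 < n) (hm : 0 < m)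
    (A : Matrix (Fin n) (Fin n) ℝ) (B : Matrix (Fin m) (Fin n) ℝ)
    (p c : Vec n → Vec n) (r : Vec m → Vec m)
    (ys : Triple n m) (hys : ys ∈ Om n m)
    (hVI : ∀ y ∈ Om n m, ipT (gOp A B p c r ys) (y - ys) ≤ 0)
    (δ L : ℝ) (hδ : 0 < δ) (hδL : δ ≤ L)
    (hmono : ∀ y ∈ Om n m,
      ipT (gOp A B p c r y - gOp A B p c r ys) (y - ys) ≤ -δ * nrmT (y - ys) ^ 2)
    (hlip : ∀ y₁ ∈ Om n m, ∀ y₂ ∈ Om n m,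
      nrmT (gOp A B p c r y₁ - gOp A B p c r y₂) ≤ L * nrmT (y₁ - y₂))
    (t : ℝ) (ht0 : 0 < t) (ht1 : t < (Real.sqrt 2 * L)⁻¹)
    (y yh : ℕ → Triple n m) (hy0 : y 0 ∈ Om n m)
    (hyh : ∀ s : ℕ, yh s = projOm (y s + t • gOp A B p c r (y s)))
    (hiter : ∀ s : ℕ, y (s + 1) = projOm (y s + t • gOp A B p c r (yh s))) :
    (0 < 1 - 2 * δ * t + 4 * (δ * t) ^ 2 / (1 + 2 * δ * t - 2 * (t * L) ^ 2) ∧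
      1 - 2 * δ * t + 4 * (δ * t) ^ 2 / (1 + 2 * δ * t - 2 * (t * L) ^ 2) < 1) ∧
    ∀ s : ℕ, nrmT (y (s + 1) - ys) ≤
      Real.sqrt (1 - 2 * δ * t + 4 * (δ * t) ^ 2 / (1 + 2 * δ * t - 2 * (t * L) ^ 2)) *
        nrmT (y s - ys) := by
  have hL : 0 < L := lt_of_lt_of_le hδ hδL
  have hT : 2 * (t * L) ^ 2 < 1 := by
    have h2 : 0 < Real.sqrt 2 := by positivity
    have h3 : t * (Real.sqrt 2 * L) < 1 := by
      have hp : 0 < Real.sqrt 2 * L := by positivity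
      calc t * (Real.sqrt 2 * L) < (Real.sqrt 2 * L)⁻¹ * (Real.sqrt 2 * L) := mul_lt_mul_of_pos_right ht1 hp
        _ = 1 := inv_mul_cancel₀ hp.ne'
    have h4 : (t * (Real.sqrt 2 * L)) ^ 2 < 1 := by
      have : 0 ≤ t * (Real.sqrt 2 * L) := by positivity
      nlinarith
    have h5 : Real.sqrt 2 ^ 2 = 2 := Real.sq_sqrt (by norm_num)
    calc 2 * (t * L) ^ 2 = (t * (Real.sqrt 2 * L)) ^ 2 := by
          rw [mul_pow, mul_pow, mul_pow, h5]; ring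
      _ < 1 := h4
  have hx : 0 < δ * t := mul_pos hδ ht0
  rw [mul_assoc 2 δ t]
  have hν : 0 < 1 + 2 * (δ * t) - 2 * (t * L) ^ 2 := by linarith
  have hq : 0 < 1 - 2 * (δ * t) + 4 * (δ * t) ^ 2 / (1 + 2 * (δ * t) - 2 * (t * L) ^ 2) := by
    have hle : 4 * (δ * t) ^ 2 / (1 + 2 * (δ * t)) ≤
        4 * (δ * t) ^ 2 / (1 + 2 * (δ * t) - 2 * (t * L) ^ 2) := by
      apply div_le_div_of_nonneg_left (by positivity) hν
      nlinarith [sq_nonneg (t * L)]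
    have : 1 - 2 * (δ * t) + 4 * (δ * t) ^ 2 / (1 + 2 * (δ * t)) = 1 / (1 + 2 * (δ * t)) := by
      field_simp; ring
    have h1 : 0 < 1 / (1 + 2 * (δ * t)) := by positivity
    linarith
  refine ⟨⟨hq, ?_⟩, ?_⟩
  · have : 4 * (δ * t) ^ 2 / (1 + 2 * (δ * t) - 2 * (t * L) ^ 2) < 2 * (δ * t) := by
      rw [div_lt_iff₀ hν]; nlinarith
    linarith
  · intro s
    have hmem : ∀ s, y s ∈ Om n m := by
      intro s
      cases s with
      | zero => exact hy0
      | succ k => rw [hiter]; exact projOm_mem _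
    have hum : yh s ∈ Om n m := by rw [hyh]; exact projOm_mem _
    have hz := ipT_proj (y s + t • gOp A B p c r (yh s)) ys hys
    rw [← hiter] at hz
    have hu := ipT_proj (y s + t • gOp A B p c r (y s)) (y (s + 1)) (hmem _)
    rw [← hyh] at hu
    have hm1 := hmono _ hum
    rw [nrmT_sq] at hm1
    have hl := pow_le_pow_left₀ (Real.sqrt_nonneg _) (hlip _ hum _ (hmem s)) 2
    rw [mul_pow, nrmT_sq] at hl
    change nrmT _ ^ 2 ≤ _ at hl
    rw [nrmT_sq] at hl
    have h1 := extra_step _ _ _ _ _ _ _ δ L t ht0 hz hu (hVI _ hum) hm1 hl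
    have h2 := extra_final _ _ _ _ _ _ hx hT h1
    unfold nrmT
    rw [← Real.sqrt_mul hq.le]
    exact Real.sqrt_le_sqrt h2
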